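/- Let u ∈ ℝ with u ≠ 0, and let (R_i)_{i≥0} and (S_i)_{i≥0} be integer-valued sequences such that R_i − u·S_i → 0 as i → ∞. Then the set { R_i : i ∈ ℕ₀ } is a generalised polynomial set if and only if the set { S_i : i ∈ ℕ₀ } is a generalised polynomial set. -/

import Mathlib

/-!
The relation `R_i ≈ u S_i` is symmetric: `S_i - u⁻¹ R_i → 0` as well, so it suffices to pass from
`{R_i}` to `{S_i}`. Fix `0 < δ ≤ min (1/4) (|u|/4)`. Up to finitely many `m`, the integer `m` is of
the form `S_i` exactly when `u m` lies within `δ` of some `R_i`, because for large `i` the number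
`u S_i` is within `δ` of `R_i`, while two integers `m` within `δ` of the same `R_i` after
multiplication by `u` coincide. The indicator of the condition
`R_i - δ ≤ u m < R_i + δ for some i` is `1_R(⌊u m + δ⌋) * (⌊u m + δ⌋ - ⌊u m - δ⌋)`, where `1_R` is
the indicator of `{R_i}`. This is a generalised polynomial, since generalised polynomials can be
composed with integer-valued ones (`IsGenPoly.comp`). The finitely many exceptions are harmless (`IsGenPoly.congr_finite`), because singletons are generalised polynomial
sets: `1_{n = k} = 1 + ⌊√2 (n - k)⌋ + ⌊-√2 (n - k)⌋` by irrationality of `√2`.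
-/

open Filter Finset Pointwise

/-- Generalised polynomials: the smallest class of functions `ℤ → ℝ` containing the
polynomial maps (with real coefficients) and closed under pointwise addition,
multiplication, and taking the integer part. -/
inductive IsGenPoly : (ℤ → ℝ) → Prop
  | poly (p : Polynomial ℝ) : IsGenPoly fun n => p.eval (n : ℝ)
  | add {f g : ℤ → ℝ} : IsGenPoly f → IsGenPoly g → IsGenPoly (f + g)
  | mul {f g : ℤ → ℝ} : IsGenPoly f → IsGenPoly g → IsGenPoly (f * g)
  | floor {f : ℤ → ℝ} : IsGenPoly f → IsGenPoly fun n => (⌊f n⌋ : ℝ)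

/-- A set of integers is generalised polynomial if its characteristic function is. -/
def IsGenPolySet (E : Set ℤ) : Prop :=
  IsGenPoly (E.indicator fun _ => (1 : ℝ))

/-- A set of natural numbers, viewed inside `ℤ`, is generalised polynomial if its
characteristic function is. -/
def IsGenPolyNatSet (E : Set ℕ) : Prop :=
  IsGenPolySet ((fun m : ℕ => (m : ℤ)) '' E)

/-- A function `ℕ → ℝ` is a generalised polynomial if it is the restriction to `ℕ`
of a generalised polynomial `ℤ → ℝ`. -/
def IsGenPolyNat (f : ℕ → ℝ) : Prop :=
  ∃ g : ℤ → ℝ, IsGenPoly g ∧ ∀ n : ℕ, g (n : ℤ) = f n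

/-- `E ⊆ ℕ` has natural density zero. -/
def HasDensityZero (E : Set ℕ) : Prop :=
  Filter.Tendsto
    (fun N : ℕ => (∑ n ∈ Finset.range N, E.indicator (fun _ => (1 : ℝ)) n) / N)
    Filter.atTop (nhds 0)

/-- `E ⊆ ℕ` is an IP set: it contains all finite sums of some sequence of positive
integers. -/
def IsIPSet (E : Set ℕ) : Prop :=
  ∃ n : ℕ → ℕ, (∀ i, 0 < n i) ∧
    ∀ α : Finset ℕ, α.Nonempty → (∑ i ∈ α, n i) ∈ E

/-- `E ⊆ ℕ` is an IPS set. -/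
def IsIPSSet (E : Set ℕ) : Prop :=
  ∃ (n : ℕ → ℕ) (N : ℕ → ℕ) (t₀ : Finset ℕ → ℕ),
    (∀ i, 0 < n i) ∧
    ∀ α : Finset ℕ, α.Nonempty → ∀ t, t₀ α ≤ t → (∑ i ∈ α, n i) + N t ∈ E

/-- The distance from a real number to the nearest integer. -/
noncomputable def distNearestInt (r : ℝ) : ℝ := |r - round r|

theorem IsGenPoly.of_eq {f g : ℤ → ℝ} (hf : IsGenPoly f) (h : ∀ n, f n = g n) :
    IsGenPoly g := funext h ▸ hf

theorem IsGenPoly.const (c : ℝ) : IsGenPoly fun _ => c :=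
  (IsGenPoly.poly (Polynomial.C c)).of_eq (by simp)

theorem IsGenPoly.linear (a b : ℝ) : IsGenPoly fun n => a * n + b :=
  (IsGenPoly.poly (Polynomial.C a * Polynomial.X + Polynomial.C b)).of_eq (by simp)

theorem IsGenPoly.sum {ι : Type*} (s : Finset ι) (f : ι → ℤ → ℝ)
    (hf : ∀ i ∈ s, IsGenPoly (f i)) : IsGenPoly (fun n => ∑ i ∈ s, f i n) := by
  classical
  induction s using Finset.induction_on with
  | empty => simpa using IsGenPoly.const 0
  | insert a s ha ih =>
    refine ((hf a (Finset.mem_insert_self a s)).add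
      (ih fun i hi => hf i (Finset.mem_insert_of_mem hi))).of_eq fun n => ?_
    simp [Finset.sum_insert ha]

theorem IsGenPoly.polyComp (p : Polynomial ℝ) {g : ℤ → ℝ} (hg : IsGenPoly g) :
    IsGenPoly fun n => p.eval (g n) := by
  induction p using Polynomial.induction_on with
  | C a => simpa using IsGenPoly.const a
  | add p q hp hq => exact (hp.add hq).of_eq (by simp)
  | monomial k a h =>
    refine (h.mul hg).of_eq fun n => ?_
    simp [pow_succ, mul_assoc]

theorem IsGenPoly.comp {f : ℤ → ℝ} (hf : IsGenPoly f) {g : ℤ → ℤ}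
    (hg : IsGenPoly fun n => (g n : ℝ)) : IsGenPoly fun n => f (g n) := by
  induction hf with
  | poly p => exact hg.polyComp p
  | add _ _ h₁ h₂ => exact h₁.add h₂
  | mul _ _ h₁ h₂ => exact h₁.mul h₂
  | floor _ h => exact h.floor

theorem IsGenPoly.single (k : ℤ) : IsGenPoly fun n => if n = k then (1 : ℝ) else 0 := by
  refine (((IsGenPoly.linear (√2) (-√2 * k)).floor.add
    (IsGenPoly.linear (-√2) (√2 * k)).floor).add (IsGenPoly.const 1)).of_eq fun n => ?_
  have e : -√2 * (n : ℝ) + √2 * k = -(√2 * n + -√2 * k) := by ring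
  simp only [Pi.add_apply, e]
  by_cases h : n = k
  · subst h
    simp
  · have hne : √2 * (n : ℝ) + -√2 * k ≠ ⌊√2 * (n : ℝ) + -√2 * k⌋ := by
      have := (irrational_sqrt_two.mul_intCast (sub_ne_zero.mpr h)).ne_int
        ⌊√2 * (n : ℝ) + -√2 * k⌋
      intro h'
      apply this
      rw [← h']
      push_cast
      ring
    generalize √2 * (n : ℝ) + -√2 * k = x at hne
    have h1 : ⌊-x⌋ = -⌊x⌋ - 1 := by
      rw [Int.floor_eq_iff]
      have := lt_of_le_of_ne (Int.floor_le x) hne.symm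
      have := Int.lt_floor_add_one x
      push_cast
      constructor <;> linarith
    simp only [h, h1, if_false]
    push_cast
    ring

/-- Changing a generalised polynomial at finitely many integers gives a generalised polynomial. -/
theorem IsGenPoly.congr_finite {f g : ℤ → ℝ} (hf : IsGenPoly f)
    (h : {n | f n ≠ g n}.Finite) : IsGenPoly g := by
  refine (hf.add (IsGenPoly.sum h.toFinset
    (fun k n => (g k - f k) * if n = k then (1 : ℝ) else 0)
    fun k _ => (IsGenPoly.const _).mul (IsGenPoly.single k))).of_eq fun n => ?_
  by_cases hn : f n = g n <;> simp [hn]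

/-- One direction of the equivalence; the other one follows by exchanging `R` and `S`. -/
theorem isGenPolySet_values_of_approx (u : ℝ) (hu : u ≠ 0) (R S : ℕ → ℤ)
    (h : Filter.Tendsto (fun i : ℕ => (R i : ℝ) - u * (S i : ℝ)) Filter.atTop (nhds 0))
    (hR : IsGenPolySet {m : ℤ | ∃ i : ℕ, m = R i}) :
    IsGenPolySet {m : ℤ | ∃ i : ℕ, m = S i} := by
  obtain ⟨δ, hδ, hδ1, hδu⟩ : ∃ δ : ℝ, 0 < δ ∧ δ ≤ 1 / 4 ∧ δ ≤ |u| / 4 :=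
    ⟨min (1 / 4) (|u| / 4), lt_min (by norm_num) (by positivity), min_le_left _ _,
      min_le_right _ _⟩
  have hu' : 0 < |u| := abs_pos.mpr hu
  -- At most one integer `m` has `u m` within `δ` of `r`, since `2 δ < |u|`.
  have key : ∀ (r : ℝ) (m m' : ℤ), |r - u * m| ≤ δ → |r - u * m'| ≤ δ → m = m' := by
    intro r m m' h1 h2
    by_contra hne
    have h3 : (1 : ℝ) ≤ |(m : ℝ) - m'| := by
      exact_mod_cast Int.one_le_abs (sub_ne_zero.mpr hne)
    have h4 : |u| * |(m : ℝ) - m'| ≤ δ + δ := by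
      rw [← abs_mul]
      calc |u * ((m : ℝ) - m')| = |(r - u * m') - (r - u * m)| := by congr 1; ring
        _ ≤ |r - u * m'| + |r - u * m| := abs_sub _ _
        _ ≤ δ + δ := add_le_add h2 h1
    nlinarith
  obtain ⟨N, hN⟩ := Metric.tendsto_atTop.mp h δ hδ
  simp only [Real.dist_eq, sub_zero] at hN
  have hg1 : IsGenPoly fun m => (⌊u * (m : ℝ) + δ⌋ : ℝ) := (IsGenPoly.linear u δ).floor
  have hg2 : IsGenPoly fun m => (⌊u * (m : ℝ) + -δ⌋ : ℝ) := (IsGenPoly.linear u (-δ)).floor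
  have hF := (hR.comp hg1).mul (hg1.add ((IsGenPoly.const (-1)).mul hg2))
  refine hF.congr_finite (Set.Finite.subset (s := S '' Set.Iio N ∪
    ⋃ i ∈ Set.Iio N, {m : ℤ | |(R i : ℝ) - u * m| ≤ δ}) ?_ ?_)
  · refine ((Set.finite_Iio N).image S).union ((Set.finite_Iio N).biUnion fun i _ => ?_)
    exact Set.Subsingleton.finite fun m hm m' hm' => key _ m m' hm hm'
  · intro m hm
    by_contra hout
    simp only [Set.mem_union, Set.mem_image, Set.mem_Iio, Set.mem_iUnion, Set.mem_ofPred_eq,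
      not_or, not_exists, not_and, exists_prop] at hout
    obtain ⟨hS, hRm⟩ := hout
    apply hm
    simp only [Pi.mul_apply, Pi.add_apply]
    by_cases hmS : ∃ i, m = S i
    · obtain ⟨i, rfl⟩ := hmS
      have hi : N ≤ i := not_lt.mp fun hi => hS i hi rfl
      obtain ⟨h1, h2⟩ := abs_lt.mp (hN i hi)
      have e1 : ⌊u * (S i : ℝ) + δ⌋ = R i := by
        rw [Int.floor_eq_iff]
        constructor <;> linarith
      have e2 : ⌊u * (S i : ℝ) + -δ⌋ = R i - 1 := by
        rw [Int.floor_eq_iff]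
        push_cast
        constructor <;> linarith
      rw [e1, e2, Set.indicator_of_mem (s := {m : ℤ | ∃ i : ℕ, m = R i}) ⟨i, rfl⟩,
        Set.indicator_of_mem (s := {m : ℤ | ∃ i : ℕ, m = S i}) ⟨i, rfl⟩]
      push_cast
      ring
    · rw [Set.indicator_of_notMem (s := {m : ℤ | ∃ i : ℕ, m = S i}) hmS]
      by_cases hmR : ∃ i, ⌊u * (m : ℝ) + δ⌋ = R i
      · obtain ⟨i, hi⟩ := hmR
        have f1 := Int.floor_le (u * (m : ℝ) + δ)
        have f2 := Int.lt_floor_add_one (u * (m : ℝ) + δ)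
        rw [hi] at f1 f2
        have hfar : ¬ |(R i : ℝ) - u * m| ≤ δ := by
          intro hle
          rcases lt_or_ge i N with hlt | hge
          · exact hRm i hlt hle
          · exact hmS ⟨i, key _ _ _ hle (hN i hge).le⟩
        have e2 : ⌊u * (m : ℝ) + -δ⌋ = R i := by
          rw [abs_le, not_and_or, not_le, not_le] at hfar
          rw [Int.floor_eq_iff]
          rcases hfar with hf | hf <;> constructor <;> linarith
        rw [hi, e2]
        ring
      · rw [Set.indicator_of_notMem (s := {m : ℤ | ∃ i : ℕ, m = R i}) hmR, zero_mul]

/-- if `R_i − u·S_i → 0` with `u ≠ 0`, then `{R_i}` is generalised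
polynomial iff `{S_i}` is. -/
theorem values_genPoly_iff (u : ℝ) (hu : u ≠ 0) (R S : ℕ → ℤ)
    (h : Filter.Tendsto (fun i : ℕ => (R i : ℝ) - u * (S i : ℝ))
      Filter.atTop (nhds 0)) :
    (IsGenPolySet {m : ℤ | ∃ i : ℕ, m = R i} ↔
      IsGenPolySet {m : ℤ | ∃ i : ℕ, m = S i}) := by
  refine ⟨isGenPolySet_values_of_approx u hu R S h,
    isGenPolySet_values_of_approx u⁻¹ (inv_ne_zero hu) S R ?_⟩
  have h' := h.const_mul (-u⁻¹)
  rw [mul_zero] at h'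
  refine h'.congr fun i => ?_
  field_simp
  ring
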